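/- arXiv:2411.10310 — 5 statements merged into one kernel-verified Lean document; each statement's English description precedes it below -/
import Mathlib

section
/- The optimal values of (RAOC) and (RAOC-LP) are equal. Moreover, if (x*, y*) is an optimal solution of (RAOC-LP), with products relabeled so that x*_1 ≥ x*_2 ≥ ⋯ ≥ x*_n, and q* is defined by q*(S_p) = (1 + ∑_{j=1}^p v_j)(x*_p − x*_{p+1}) for S_p = {1,…,p}, p = 1,…,n (with the convention x*_{n+1} = 0), q*(∅) = 1 − ∑_{p=1}^n q*(S_p), and q*(S) = 0 for all other S, then q* is an optimal solution of (RAOC). -/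
/-!
Both problems are linked by the change of variables `q(S) = (1 + V(S)) d(S)`, where
`V(S) = ∑_{j ∈ S} v j`.

From any feasible `q'`, the weights `d(S) = q'(S) / (1 + V(S))` give an LP-feasible point
`x0 = ∑_S d(S)`, `x i = ∑_{S ∋ i} d(S)`, `y i j = ∑_{S ∋ i, j} d(S)` with the same objective value
(`lpFeasible_of_raocFeasible`, `raocObj_eq_lp`); hence the LP value bounds every randomized value.

Conversely, for a nonincreasing LP-feasible `x` the nested assortments `{1, …, p}` receive
`d_p = x_p - x_{p+1} ≥ 0`. Telescoping gives `∑_{p ≥ j} d_p = x_j` (`sum_tailDiff`), so all linear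
statistics of `q` are linear in `x`. In particular the expected number of offered products from
`C k` equals `∑_{i ∈ C k} (x_i + ∑_j v_j x_{max(i,j)})`, and `x_{max(i,j)} = min(x_i, x_j) ≥ y i j`.
-/

open Finset

/-- Expected revenue of an assortment under the MNL model. -/
noncomputable def mnlRev {n : ℕ} (r v : Fin n → ℝ) (S : Finset (Fin n)) : ℝ :=
  (∑ i ∈ S, r i * v i) / (1 + ∑ i ∈ S, v i)

/-- Feasibility for the randomized problem (RAOC). -/
def raocFeasible {n K : ℕ} (C : Fin K → Finset (Fin n)) (ℓ : Fin K → ℕ)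
    (q : Finset (Fin n) → ℝ) : Prop :=
  (∀ S, 0 ≤ q S) ∧ (∑ S : Finset (Fin n), q S = 1) ∧
    ∀ k, (ℓ k : ℝ) ≤ ∑ S : Finset (Fin n), ((S ∩ C k).card : ℝ) * q S

/-- Objective of (RAOC). -/
noncomputable def raocObj {n : ℕ} (r v : Fin n → ℝ) (q : Finset (Fin n) → ℝ) : ℝ :=
  ∑ S : Finset (Fin n), mnlRev r v S * q S

/-- Feasibility for the linear program (RAOC-LP). -/
def lpFeasible {n K : ℕ} (v : Fin n → ℝ) (C : Fin K → Finset (Fin n)) (ℓ : Fin K → ℕ)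
    (x0 : ℝ) (x : Fin n → ℝ) (y : Fin n → Fin n → ℝ) : Prop :=
  x0 + ∑ i, v i * x i = 1 ∧
  (∀ i, 0 ≤ x i) ∧ (∀ i, x i ≤ x0) ∧
  (∀ i j, 0 ≤ y i j) ∧ (∀ i j, y i j ≤ x i) ∧ (∀ i j, y i j ≤ x j) ∧
  ∀ k, (ℓ k : ℝ) ≤ ∑ i ∈ C k, (x i + ∑ j, v j * y i j)

/-- The increment `x_p - x_{p+1}`, with the convention that `x` vanishes past its last entry. -/
noncomputable def tailDiff {n : ℕ} (x : Fin n → ℝ) (p : Fin n) : ℝ :=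
  x p - (if h : (p : ℕ) + 1 < n then x ⟨(p : ℕ) + 1, h⟩ else 0)

lemma tailDiff_nonneg {n : ℕ} (x : Fin n → ℝ) (hx : ∀ i, 0 ≤ x i)
    (hmono : ∀ i j : Fin n, i ≤ j → x j ≤ x i) (p : Fin n) : 0 ≤ tailDiff x p := by
  unfold tailDiff
  split_ifs with h
  · have := hmono p ⟨(p : ℕ) + 1, h⟩ (by rw [Fin.le_def]; simp)
    linarith
  · simpa using hx p

lemma sum_tailDiff {n : ℕ} (x : Fin n → ℝ) (j : Fin n) :
    ∑ p, (if j ≤ p then tailDiff x p else 0) = x j := by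
  -- `X` extends `x` by zero to all of `ℕ`, so that the sum telescopes over `Ico j n`.
  set X : ℕ → ℝ := fun m => if h : m < n then x ⟨m, h⟩ else 0 with hX
  have h1 : ∀ p : Fin n, (if j ≤ p then tailDiff x p else 0)
      = (fun m : ℕ => if (j : ℕ) ≤ m then X m - X (m + 1) else 0) (p : ℕ) := by
    intro p
    simp only [tailDiff, hX, Fin.le_def, p.isLt, dif_pos, Fin.eta]
  rw [Finset.sum_congr rfl (fun p _ => h1 p),
    Fin.sum_univ_eq_sum_range (fun m : ℕ => if (j : ℕ) ≤ m then X m - X (m + 1) else 0),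
    ← Finset.sum_filter]
  have h2 : (Finset.range n).filter (fun m => (j : ℕ) ≤ m) = Finset.Ico (j : ℕ) n := by
    ext m; simp [and_comm]
  have h3 := Finset.sum_Ico_sub X j.2.le
  rw [h2]
  have h4 : ∑ m ∈ Finset.Ico (j : ℕ) n, (X m - X (m + 1))
      = - ∑ m ∈ Finset.Ico (j : ℕ) n, (X (m + 1) - X m) := by
    rw [← Finset.sum_neg_distrib]
    exact Finset.sum_congr rfl (fun _ _ => by ring)
  rw [h4, h3]
  simp [hX]

/-- Summation by parts: the linear statistic `w` of the nested assortments, weighted by the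
increments of `x`. -/
lemma sum_Iic_mul_tailDiff {n : ℕ} (x w : Fin n → ℝ) :
    ∑ p, (∑ j ∈ Finset.Iic p, w j) * tailDiff x p = ∑ j, w j * x j := by
  have h1 : ∀ p, (∑ j ∈ Finset.Iic p, w j) * tailDiff x p
      = ∑ j, w j * (if j ≤ p then tailDiff x p else 0) := by
    intro p
    have : Finset.Iic p = Finset.univ.filter (fun j => j ≤ p) := by ext; simp
    rw [this, Finset.sum_filter, Finset.sum_mul]
    exact Finset.sum_congr rfl (fun j _ => by split_ifs <;> simp)
  rw [Finset.sum_congr rfl (fun p _ => h1 p), Finset.sum_comm]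
  exact Finset.sum_congr rfl (fun j _ => by rw [← Finset.mul_sum, sum_tailDiff])

lemma sum_tailDiff_le {n : ℕ} (x : Fin n → ℝ) (x0 : ℝ) (h0 : 0 ≤ x0) (hx : ∀ i, x i ≤ x0) :
    ∑ p, tailDiff x p ≤ x0 := by
  rcases n with _ | n
  · simpa using h0
  · have h := sum_tailDiff x 0
    simp only [Fin.zero_le, if_true] at h
    rw [h]; exact hx 0

/-- A `q` supported on the empty set and the nested assortments turns sums over all assortments
into sums over the `n + 1` assortments of its support. -/
lemma sum_nested {n : ℕ} (q : Finset (Fin n) → ℝ)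
    (hq3 : ∀ S : Finset (Fin n), S ≠ ∅ → (∀ p : Fin n, S ≠ Finset.Iic p) → q S = 0)
    (f : Finset (Fin n) → ℝ) :
    ∑ S, f S * q S = f ∅ * q ∅ + ∑ p : Fin n, f (Finset.Iic p) * q (Finset.Iic p) := by
  classical
  have hinj : Function.Injective (fun p : Fin n => Finset.Iic p) := by
    intro a b hab
    have hab' : Finset.Iic a = Finset.Iic b := hab
    have h1 : a ∈ Finset.Iic b := hab' ▸ Finset.mem_Iic.2 le_rfl
    have h2 : b ∈ Finset.Iic a := hab'.symm ▸ Finset.mem_Iic.2 le_rfl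
    exact le_antisymm (Finset.mem_Iic.1 h1) (Finset.mem_Iic.1 h2)
  have hne : ∅ ∉ Finset.univ.image (fun p : Fin n => Finset.Iic p) := by
    intro h
    obtain ⟨p, -, hp⟩ := Finset.mem_image.1 h
    have : p ∈ (∅ : Finset (Fin n)) := hp ▸ Finset.mem_Iic.2 le_rfl
    simp at this
  rw [← Finset.sum_subset
    (Finset.subset_univ (insert ∅ (Finset.univ.image (fun p : Fin n => Finset.Iic p)))),
    Finset.sum_insert hne, Finset.sum_image (fun a _ b _ h => hinj h)]
  intro S _ hS
  rw [Finset.mem_insert, not_or] at hS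
  rw [hq3 S hS.1 (fun p hp => hS.2 (Finset.mem_image.2 ⟨p, Finset.mem_univ _, hp.symm⟩)),
    mul_zero]

lemma one_add_sum_pos {n : ℕ} (v : Fin n → ℝ) (hv : ∀ i, 0 < v i) (S : Finset (Fin n)) :
    0 < 1 + ∑ i ∈ S, v i := by
  have := Finset.sum_nonneg (s := S) (fun i _ => (hv i).le)
  linarith

lemma raocFeasible_nested {n K : ℕ} (v : Fin n → ℝ) (hv : ∀ i, 0 < v i)
    (C : Fin K → Finset (Fin n)) (ℓ : Fin K → ℕ)
    (x0 : ℝ) (x : Fin n → ℝ) (y : Fin n → Fin n → ℝ)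
    (hfeas : lpFeasible v C ℓ x0 x y)
    (hmono : ∀ i j : Fin n, i ≤ j → x j ≤ x i)
    (q : Finset (Fin n) → ℝ)
    (hq1 : ∀ p : Fin n, q (Finset.Iic p) = (1 + ∑ j ∈ Finset.Iic p, v j) * tailDiff x p)
    (hq2 : q ∅ = 1 - ∑ p : Fin n, q (Finset.Iic p))
    (hq3 : ∀ S : Finset (Fin n), S ≠ ∅ → (∀ p : Fin n, S ≠ Finset.Iic p) → q S = 0) :
    raocFeasible C ℓ q := by
  classical
  obtain ⟨hsum, hx, hxx0, -, hyi, hyj, hC⟩ := hfeas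
  refine ⟨?_, ?_, ?_⟩
  · intro S
    have hx0 : 0 ≤ x0 := by
      rcases n with _ | n
      · simp at hsum; linarith
      · exact (hx 0).trans (hxx0 0)
    by_cases hS : S = ∅
    · have h1 : ∑ p, q (Finset.Iic p) = ∑ p, tailDiff x p + ∑ j, v j * x j := by
        rw [← sum_Iic_mul_tailDiff, ← Finset.sum_add_distrib]
        exact Finset.sum_congr rfl (fun p _ => by rw [hq1]; ring)
      have h2 := sum_tailDiff_le x x0 hx0 hxx0
      rw [hS, hq2, h1]; linarith
    · by_cases hp : ∃ p : Fin n, S = Finset.Iic p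
      · obtain ⟨p, rfl⟩ := hp
        rw [hq1]
        exact mul_nonneg (one_add_sum_pos v hv _).le (tailDiff_nonneg x hx hmono p)
      · exact (hq3 S hS (fun p h => hp ⟨p, h⟩)).ge
  · have h := sum_nested q hq3 (fun _ => 1)
    simp only [one_mul] at h
    rw [h, hq2]; ring
  · intro k
    refine (hC k).trans ?_
    rw [sum_nested q hq3 (fun S => ((S ∩ C k).card : ℝ))]
    simp only [Finset.empty_inter, Finset.card_empty, Nat.cast_zero, zero_mul, zero_add]
    have h1 : ∀ p : Fin n, ((Finset.Iic p ∩ C k).card : ℝ) * q (Finset.Iic p)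
        = ∑ i ∈ C k, (if i ≤ p then tailDiff x p else 0) +
          ∑ i ∈ C k, ∑ j, v j * (if max i j ≤ p then tailDiff x p else 0) := by
      intro p
      have hI : Finset.Iic p = Finset.univ.filter (fun j => j ≤ p) := by ext; simp
      have hc : ((Finset.Iic p ∩ C k).card : ℝ) = ∑ i ∈ C k, (if i ≤ p then (1 : ℝ) else 0) := by
        rw [Finset.sum_boole, Finset.inter_comm]
        congr 2
        ext; simp
      rw [hc, hq1, Finset.sum_mul, ← Finset.sum_add_distrib]
      refine Finset.sum_congr rfl (fun i _ => ?_)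
      by_cases hi : i ≤ p
      · simp only [hi, if_true, max_le_iff, true_and, one_mul]
        rw [hI, Finset.sum_filter, add_mul, Finset.sum_mul, one_mul]
        congr 1
        exact Finset.sum_congr rfl (fun j _ => by split_ifs <;> simp)
      · simp [hi]
    have h2 : ∑ p : Fin n, ((Finset.Iic p ∩ C k).card : ℝ) * q (Finset.Iic p)
        = ∑ i ∈ C k, (x i + ∑ j, v j * x (max i j)) := by
      rw [Finset.sum_congr rfl (fun p _ => h1 p), Finset.sum_add_distrib, Finset.sum_comm,
        Finset.sum_comm (s := Finset.univ) (t := C k), ← Finset.sum_add_distrib]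
      refine Finset.sum_congr rfl (fun i _ => ?_)
      rw [sum_tailDiff, Finset.sum_comm]
      congr 1
      exact Finset.sum_congr rfl (fun j _ => by rw [← Finset.mul_sum, sum_tailDiff])
    rw [h2]
    refine Finset.sum_le_sum (fun i _ => ?_)
    refine add_le_add le_rfl (Finset.sum_le_sum (fun j _ => ?_))
    refine mul_le_mul_of_nonneg_left ?_ (hv j).le
    rcases max_choice i j with h | h <;> rw [h]
    · exact hyi i j
    · exact hyj i j

lemma raocObj_nested {n : ℕ} (r v : Fin n → ℝ) (hv : ∀ i, 0 < v i) (x : Fin n → ℝ)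
    (q : Finset (Fin n) → ℝ)
    (hq1 : ∀ p : Fin n, q (Finset.Iic p) = (1 + ∑ j ∈ Finset.Iic p, v j) * tailDiff x p)
    (hq3 : ∀ S : Finset (Fin n), S ≠ ∅ → (∀ p : Fin n, S ≠ Finset.Iic p) → q S = 0) :
    raocObj r v q = ∑ i, r i * v i * x i := by
  unfold raocObj
  rw [sum_nested q hq3, ← sum_Iic_mul_tailDiff x (fun i => r i * v i)]
  have h0 : mnlRev r v ∅ = 0 := by simp [mnlRev]
  rw [h0, zero_mul, zero_add]
  refine Finset.sum_congr rfl (fun p _ => ?_)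
  rw [hq1, mnlRev, ← mul_assoc, div_mul_cancel₀ _ (one_add_sum_pos v hv _).ne']

/-- The weight `d(S) = q(S) / (1 + V(S))`, the probability that `S` is offered and the customer
leaves without a purchase. -/
noncomputable def lpWeight {n : ℕ} (v : Fin n → ℝ) (q : Finset (Fin n) → ℝ)
    (S : Finset (Fin n)) : ℝ :=
  q S / (1 + ∑ i ∈ S, v i)

lemma lpWeight_add {n : ℕ} (v : Fin n → ℝ) (hv : ∀ i, 0 < v i) (q : Finset (Fin n) → ℝ)
    (S : Finset (Fin n)) :
    lpWeight v q S + ∑ i, v i * (if i ∈ S then lpWeight v q S else 0) = q S := by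
  have h : ∑ i, v i * (if i ∈ S then lpWeight v q S else 0)
      = (∑ i ∈ S, v i) * lpWeight v q S := by
    rw [Finset.sum_mul]
    simp [mul_ite]
  have hpos := one_add_sum_pos v hv S
  rw [h]
  calc lpWeight v q S + (∑ i ∈ S, v i) * lpWeight v q S
      = lpWeight v q S * (1 + ∑ i ∈ S, v i) := by ring
    _ = q S := by rw [lpWeight, div_mul_cancel₀ _ hpos.ne']

lemma lpFeasible_of_raocFeasible {n K : ℕ} (v : Fin n → ℝ) (hv : ∀ i, 0 < v i)
    (C : Fin K → Finset (Fin n)) (ℓ : Fin K → ℕ) (q : Finset (Fin n) → ℝ)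
    (hq : raocFeasible C ℓ q) :
    lpFeasible v C ℓ (∑ S, lpWeight v q S) (fun i => ∑ S, if i ∈ S then lpWeight v q S else 0)
      (fun i j => ∑ S, if i ∈ S ∧ j ∈ S then lpWeight v q S else 0) := by
  obtain ⟨hq0, hq1, hqC⟩ := hq
  have hd : ∀ S, 0 ≤ lpWeight v q S :=
    fun S => div_nonneg (hq0 S) (one_add_sum_pos v hv S).le
  have hite : ∀ (P : Prop) [Decidable P] S, 0 ≤ if P then lpWeight v q S else 0 := by
    intro P _ S
    split_ifs
    exacts [hd S, le_rfl]
  refine ⟨?_, ?_, ?_, ?_, ?_, ?_, ?_⟩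
  · rw [← hq1]
    simp only [Finset.mul_sum]
    rw [Finset.sum_comm, ← Finset.sum_add_distrib]
    exact Finset.sum_congr rfl (fun S _ => lpWeight_add v hv q S)
  · exact fun i => Finset.sum_nonneg (fun S _ => hite _ S)
  · intro i
    refine Finset.sum_le_sum (fun S _ => ?_)
    split_ifs
    exacts [le_rfl, hd S]
  · exact fun i j => Finset.sum_nonneg (fun S _ => hite _ S)
  · intro i j
    refine Finset.sum_le_sum (fun S _ => ?_)
    by_cases hi : i ∈ S <;> by_cases hj : j ∈ S <;> simp [hi, hj, hd S]
  · intro i j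
    refine Finset.sum_le_sum (fun S _ => ?_)
    by_cases hi : i ∈ S <;> by_cases hj : j ∈ S <;> simp [hi, hj, hd S]
  · intro k
    refine (hqC k).trans (le_of_eq ?_)
    have h1 : ∀ S : Finset (Fin n), ((S ∩ C k).card : ℝ) * q S
        = ∑ i ∈ C k, ((if i ∈ S then lpWeight v q S else 0) +
            ∑ j, v j * (if i ∈ S ∧ j ∈ S then lpWeight v q S else 0)) := by
      intro S
      have hc : ((S ∩ C k).card : ℝ) = ∑ i ∈ C k, (if i ∈ S then (1 : ℝ) else 0) := by
        rw [Finset.sum_boole, Finset.inter_comm, Finset.filter_mem_eq_inter]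
      rw [hc, Finset.sum_mul]
      refine Finset.sum_congr rfl (fun i _ => ?_)
      by_cases hi : i ∈ S
      · simp only [hi, if_true, true_and, one_mul]
        exact (lpWeight_add v hv q S).symm
      · simp [hi]
    rw [Finset.sum_congr rfl (fun S _ => h1 S), Finset.sum_comm]
    refine Finset.sum_congr rfl (fun i _ => ?_)
    rw [Finset.sum_add_distrib, Finset.sum_comm]
    simp only [Finset.mul_sum]

lemma raocObj_eq_lp {n : ℕ} (r v : Fin n → ℝ) (q : Finset (Fin n) → ℝ) :
    raocObj r v q = ∑ i, r i * v i * ∑ S, (if i ∈ S then lpWeight v q S else 0) := by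
  simp only [Finset.mul_sum]
  rw [Finset.sum_comm]
  refine Finset.sum_congr rfl (fun S _ => ?_)
  have h : ∑ i, r i * v i * (if i ∈ S then lpWeight v q S else 0)
      = (∑ i ∈ S, r i * v i) * lpWeight v q S := by
    rw [Finset.sum_mul]
    simp [mul_ite]
  rw [h, mnlRev, lpWeight]
  ring

theorem stmt4 {n K : ℕ} (r v : Fin n → ℝ) (hr : ∀ i, 0 ≤ r i) (hv : ∀ i, 0 < v i)
    (C : Fin K → Finset (Fin n)) (ℓ : Fin K → ℕ) (hℓ : ∀ k, ℓ k ≤ (C k).card)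
    (x0 : ℝ) (x : Fin n → ℝ) (y : Fin n → Fin n → ℝ)
    (hfeas : lpFeasible v C ℓ x0 x y)
    (hopt : ∀ x0' x' y', lpFeasible v C ℓ x0' x' y' →
      ∑ i, r i * v i * x' i ≤ ∑ i, r i * v i * x i)
    -- products relabeled so that `x` is nonincreasing
    (hmono : ∀ i j : Fin n, i ≤ j → x j ≤ x i)
    (q : Finset (Fin n) → ℝ)
    -- q*(S_p) = (1 + ∑_{j=1}^p v_j)(x*_p − x*_{p+1}), with x*_{n+1} = 0
    (hq1 : ∀ p : Fin n, q (Finset.Iic p) =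
      (1 + ∑ j ∈ Finset.Iic p, v j) *
        (x p - (if h : (p : ℕ) + 1 < n then x ⟨(p : ℕ) + 1, h⟩ else 0)))
    (hq2 : q ∅ = 1 - ∑ p : Fin n, q (Finset.Iic p))
    (hq3 : ∀ S : Finset (Fin n), S ≠ ∅ → (∀ p : Fin n, S ≠ Finset.Iic p) → q S = 0) :
    raocFeasible C ℓ q ∧
    (∀ q' : Finset (Fin n) → ℝ, raocFeasible C ℓ q' → raocObj r v q' ≤ raocObj r v q) ∧
    raocObj r v q = ∑ i, r i * v i * x i := by
  have hobj := raocObj_nested r v hv x q hq1 hq3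
  refine ⟨raocFeasible_nested v hv C ℓ x0 x y hfeas hmono q hq1 hq2 hq3, ?_, hobj⟩
  intro q' hq'
  rw [hobj, raocObj_eq_lp]
  exact hopt _ _ _ (lpFeasible_of_raocFeasible v hv C ℓ q' hq')
end

section
/- Assume n ≥ 1. There exists an optimal solution q* of (RAOC) that offers at most min(K+1, n) assortments with positive probability, i.e., |{S ⊆ N : q*(S) > 0}| ≤ min(K+1, n). -/
/-!
Let `i₀` be a product of largest revenue. Adding `i₀` to any assortment does not lower its MNL
revenue (`mnlRev_le_insert`) and does not lower any coverage, so pushing a feasible distribution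
forward along `S ↦ insert i₀ S` (`pushInsert`) keeps it feasible with at least the same objective.
Hence some optimal distribution offers only assortments containing `i₀`.

For such a distribution `q` the support can be shrunk as for basic feasible solutions. A direction
`c ≠ 0`, carried by the support of `q`, with zero total mass and zero effect on every coverage
allows moving from `q` along `c` or `-c`, whichever does not decrease the objective, until some
probability reaches zero (`exists_reduce`). Such a `c` exists if the support has more than `K + 1`
members, by a linear dependence among the vectors `(1, (|S ∩ C_k|)_k)`. It also exists if
the support has more than `n` members: a linear dependence among the indicator vectors of the
assortments in `ℝⁿ` kills all coverages, and its coordinate at `i₀` says that the total mass is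
zero, because every assortment contains `i₀`.
-/

open Finset

/-- Inserting a product of largest revenue is an improvement: `R(S)` is at most that revenue, and
`R(insert i₀ S)` is a weighted average of the two. -/
lemma mnlRev_le_insert {n : ℕ} (r v : Fin n → ℝ) (hr : ∀ i, 0 ≤ r i) (hv : ∀ i, 0 < v i)
    (i₀ : Fin n) (hmax : ∀ i, r i ≤ r i₀) (S : Finset (Fin n)) :
    mnlRev r v S ≤ mnlRev r v (insert i₀ S) := by
  by_cases h : i₀ ∈ S
  · rw [Finset.insert_eq_of_mem h]
  · unfold mnlRev
    rw [Finset.sum_insert h, Finset.sum_insert h]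
    have hV : 0 ≤ ∑ i ∈ S, v i := Finset.sum_nonneg fun i _ => (hv i).le
    have hA : ∑ i ∈ S, r i * v i ≤ r i₀ * ∑ i ∈ S, v i := by
      rw [Finset.mul_sum]
      exact Finset.sum_le_sum fun i _ => mul_le_mul_of_nonneg_right (hmax i) (hv i).le
    have h0 := hv i₀
    have hr0 := hr i₀
    rw [div_le_div_iff₀ (by linarith) (by linarith)]
    nlinarith [mul_le_mul_of_nonneg_left hA h0.le, mul_nonneg hr0 h0.le]

/-- The law of `insert i₀ S` when `S` has law `q`. -/
noncomputable def pushInsert {n : ℕ} (i₀ : Fin n) (q : Finset (Fin n) → ℝ) :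
    Finset (Fin n) → ℝ :=
  fun T => ∑ S : Finset (Fin n), if insert i₀ S = T then q S else 0

lemma sum_mul_pushInsert {n : ℕ} (i₀ : Fin n) (q f : Finset (Fin n) → ℝ) :
    ∑ T, f T * pushInsert i₀ q T = ∑ S, f (insert i₀ S) * q S := by
  unfold pushInsert
  simp_rw [Finset.mul_sum]
  rw [Finset.sum_comm]
  simp

lemma pushInsert_eq_zero {n : ℕ} (i₀ : Fin n) (q : Finset (Fin n) → ℝ) (T : Finset (Fin n))
    (hT : i₀ ∉ T) : pushInsert i₀ q T = 0 := by
  unfold pushInsert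
  refine Finset.sum_eq_zero fun S _ => if_neg ?_
  rintro rfl
  exact hT (Finset.mem_insert_self _ _)

lemma pushInsert_feasible {n K : ℕ} (C : Fin K → Finset (Fin n)) (ℓ : Fin K → ℕ) (i₀ : Fin n)
    (q : Finset (Fin n) → ℝ) (hq : raocFeasible C ℓ q) :
    raocFeasible C ℓ (pushInsert i₀ q) := by
  obtain ⟨h0, h1, h2⟩ := hq
  refine ⟨fun T => ?_, ?_, fun k => ?_⟩
  · refine Finset.sum_nonneg fun S _ => ?_
    split_ifs
    · exact h0 S
    · exact le_rfl
  · have := sum_mul_pushInsert i₀ q fun _ => 1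
    simp only [one_mul] at this
    rw [this, h1]
  · rw [sum_mul_pushInsert i₀ q fun T => ((T ∩ C k).card : ℝ)]
    refine (h2 k).trans (Finset.sum_le_sum fun S _ => mul_le_mul_of_nonneg_right ?_ (h0 S))
    exact_mod_cast Finset.card_le_card
      (Finset.inter_subset_inter_right (Finset.subset_insert _ _))

/-- Moving along a direction `c` that preserves total mass and coverages, and does not decrease the
objective, up to the boundary of the nonnegative orthant. -/
lemma exists_reduce_of_direction {n K : ℕ} (r v : Fin n → ℝ) (C : Fin K → Finset (Fin n))
    (ℓ : Fin K → ℕ) (q c : Finset (Fin n) → ℝ) (hq : raocFeasible C ℓ q)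
    (hsupp : ∀ S, q S = 0 → c S = 0) (hc0 : ∃ S, c S ≠ 0) (hsum : ∑ S, c S = 0)
    (hcov : ∀ k, ∑ S, ((S ∩ C k).card : ℝ) * c S = 0)
    (hobj : 0 ≤ ∑ S, mnlRev r v S * c S) :
    ∃ q', raocFeasible C ℓ q' ∧ raocObj r v q ≤ raocObj r v q' ∧
      (∀ S, q S = 0 → q' S = 0) ∧ ∃ S, q S ≠ 0 ∧ q' S = 0 := by
  obtain ⟨h0, h1, h2⟩ := hq
  obtain ⟨S₁, hS₁⟩ : ∃ S, c S < 0 := by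
    by_contra! hcon
    obtain ⟨S, hS⟩ := hc0
    exact hS ((Finset.sum_eq_zero_iff_of_nonneg fun S _ => hcon S).1 hsum S (Finset.mem_univ _))
  -- `S₂` is the assortment whose probability vanishes first.
  obtain ⟨S₂, hS₂, hmin⟩ := Finset.exists_min_image
    (Finset.univ.filter fun S => c S < 0) (fun S => q S / (-c S)) ⟨S₁, by simpa using hS₁⟩
  simp only [Finset.mem_filter, Finset.mem_univ, true_and] at hS₂ hmin
  set t := q S₂ / (-c S₂) with ht
  have ht0 : 0 ≤ t := div_nonneg (h0 _) (by linarith)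
  have key : ∀ f : Finset (Fin n) → ℝ,
      ∑ S, f S * (q S + t * c S) = ∑ S, f S * q S + t * ∑ S, f S * c S := by
    intro f
    rw [Finset.mul_sum, ← Finset.sum_add_distrib]
    exact Finset.sum_congr rfl fun S _ => by ring
  refine ⟨fun S => q S + t * c S, ⟨fun S => ?_, ?_, fun k => ?_⟩, ?_, fun S hS => ?_, S₂, ?_, ?_⟩
  · rcases lt_or_ge (c S) 0 with h | h
    · have := hmin S h
      rw [le_div_iff₀ (by linarith)] at this
      dsimp only
      linarith
    · exact add_nonneg (h0 S) (mul_nonneg ht0 h)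
  · have := key fun _ => 1
    simp only [one_mul] at this
    rw [this, h1, hsum]
    ring
  · rw [key, hcov]
    simpa using h2 k
  · unfold raocObj
    rw [key]
    linarith [mul_nonneg ht0 hobj]
  · simp [hS, hsupp S hS]
  · intro h
    exact hS₂.ne (hsupp _ h)
  · have : c S₂ ≠ 0 := hS₂.ne
    simp only [ht]
    field_simp
    ring

lemma exists_reduce {n K : ℕ} (r v : Fin n → ℝ) (C : Fin K → Finset (Fin n))
    (ℓ : Fin K → ℕ) (q c : Finset (Fin n) → ℝ) (hq : raocFeasible C ℓ q)
    (hsupp : ∀ S, q S = 0 → c S = 0) (hc0 : ∃ S, c S ≠ 0) (hsum : ∑ S, c S = 0)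
    (hcov : ∀ k, ∑ S, ((S ∩ C k).card : ℝ) * c S = 0) :
    ∃ q', raocFeasible C ℓ q' ∧ raocObj r v q ≤ raocObj r v q' ∧
      (∀ S, q S = 0 → q' S = 0) ∧ ∃ S, q S ≠ 0 ∧ q' S = 0 := by
  rcases le_total 0 (∑ S, mnlRev r v S * c S) with h | h
  · exact exists_reduce_of_direction r v C ℓ q c hq hsupp hc0 hsum hcov h
  · refine exists_reduce_of_direction r v C ℓ q (fun S => -c S) hq
      (fun S hS => by simp [hsupp S hS]) (by simpa using hc0) (by simp [hsum])
      (fun k => by simp [hcov k]) (by simpa using h)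

/-- More than `|ι|` vectors in `ℝ^ι` are linearly dependent; the coefficients are extended by zero
to all assortments. -/
lemma exists_relation {n : ℕ} {ι : Type*} [Fintype ι] (s : Finset (Finset (Fin n)))
    (f : Finset (Fin n) → ι → ℝ) (h : Fintype.card ι < s.card) :
    ∃ c : Finset (Fin n) → ℝ, (∀ S, S ∉ s → c S = 0) ∧ (∃ S, c S ≠ 0) ∧
      ∀ j, ∑ S, f S j * c S = 0 := by
  have hf : Module.finrank ℝ (ι → ℝ) < Fintype.card s := by simpa using h
  have hdep : ¬ LinearIndependent ℝ (fun S : s => f S) := fun hli =>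
    absurd hli.fintype_card_le_finrank (by omega)
  obtain ⟨g, hg, ⟨S₀, hS₀⟩, hne⟩ := Fintype.not_linearIndependent_iff.1 hdep
  refine ⟨fun S => if hS : S ∈ s then g ⟨S, hS⟩ else 0, fun S hS => by simp [hS],
    ⟨S₀, by simpa [hS₀] using hne⟩, fun j => ?_⟩
  have hj := congrFun hg j
  simp only [Finset.sum_apply, Pi.smul_apply, smul_eq_mul, Pi.zero_apply] at hj
  rw [← Finset.sum_subset (Finset.subset_univ s) (fun S _ hS => by simp [hS]),
    ← Finset.sum_coe_sort s]
  refine Eq.trans ?_ hj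
  exact Finset.sum_congr rfl fun S _ => by simp [mul_comm]

/-- A support larger than `min (K + 1) n`, all of whose members contain `i₀`, carries a nonzero
direction that preserves total mass and all coverages. -/
lemma exists_direction {n K : ℕ} (C : Fin K → Finset (Fin n)) (i₀ : Fin n)
    (s : Finset (Finset (Fin n))) (hs : ∀ S ∈ s, i₀ ∈ S) (h : min (K + 1) n < s.card) :
    ∃ c : Finset (Fin n) → ℝ, (∀ S, S ∉ s → c S = 0) ∧ (∃ S, c S ≠ 0) ∧ (∑ S, c S = 0) ∧
      ∀ k, ∑ S, ((S ∩ C k).card : ℝ) * c S = 0 := by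
  rcases min_lt_iff.1 h with h | h
  · obtain ⟨c, h1, h2, h3⟩ := exists_relation s
      (fun S (o : Option (Fin K)) => o.elim (1 : ℝ) fun k => ((S ∩ C k).card : ℝ)) (by simpa using h)
    exact ⟨c, h1, h2, by simpa using h3 none, fun k => by simpa using h3 (some k)⟩
  · obtain ⟨c, h1, h2, h3⟩ := exists_relation s
      (fun S (i : Fin n) => if i ∈ S then (1 : ℝ) else 0) (by simpa using h)
    refine ⟨c, h1, h2, ?_, fun k => ?_⟩
    · rw [← h3 i₀]
      refine Finset.sum_congr rfl fun S _ => ?_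
      by_cases hS : S ∈ s
      · simp [hs S hS]
      · simp [h1 S hS]
    · -- `|S ∩ C_k|` is the sum of the coordinates in `C_k` of the indicator vector of `S`.
      have hcard : ∀ S : Finset (Fin n),
          ((S ∩ C k).card : ℝ) = ∑ i ∈ C k, if i ∈ S then (1 : ℝ) else 0 := by
        intro S
        rw [Finset.sum_boole, Finset.filter_mem_eq_inter, Finset.inter_comm]
      simp_rw [hcard, Finset.sum_mul]
      rw [Finset.sum_comm]
      exact Finset.sum_eq_zero fun i _ => h3 i

lemma exists_small_support {n K : ℕ} (r v : Fin n → ℝ) (C : Fin K → Finset (Fin n))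
    (ℓ : Fin K → ℕ) (i₀ : Fin n) (m : ℕ) :
    ∀ q : Finset (Fin n) → ℝ, raocFeasible C ℓ q → (∀ S, i₀ ∉ S → q S = 0) →
      (Finset.univ.filter fun S => q S ≠ 0).card = m →
      ∃ q', raocFeasible C ℓ q' ∧ raocObj r v q ≤ raocObj r v q' ∧
        (Finset.univ.filter fun S => q' S ≠ 0).card ≤ min (K + 1) n := by
  induction m using Nat.strong_induction_on with
  | _ m ih =>
    intro q hq hi hm
    rcases le_or_gt m (min (K + 1) n) with hle | hgt
    · exact ⟨q, hq, le_rfl, hm ▸ hle⟩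
    · obtain ⟨c, h1, h2, h3, h4⟩ := exists_direction C i₀ (Finset.univ.filter fun S => q S ≠ 0)
        (fun S hS => by
          by_contra hcon
          exact (Finset.mem_filter.1 hS).2 (hi S hcon)) (hm ▸ hgt)
      obtain ⟨q', hq', hobj, hz, S, hS, hS'⟩ :=
        exists_reduce r v C ℓ q c hq (fun S hS => h1 S (by simpa using hS)) h2 h3 h4
      have hlt : (Finset.univ.filter fun S => q' S ≠ 0).card < m := by
        rw [← hm]
        refine Finset.card_lt_card ((Finset.ssubset_iff_of_subset fun T hT => ?_).2 ⟨S, ?_, ?_⟩)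
        · simp only [Finset.mem_filter, Finset.mem_univ, true_and] at hT ⊢
          exact fun h => hT (hz T h)
        · simpa using hS
        · simpa using hS'
      obtain ⟨q'', a, b, d⟩ := ih _ hlt q' hq' (fun S hS => hz S (hi S hS)) rfl
      exact ⟨q'', a, hobj.trans b, d⟩

lemma exists_optimal {n K : ℕ} (r v : Fin n → ℝ) (C : Fin K → Finset (Fin n))
    (ℓ : Fin K → ℕ) (hℓ : ∀ k, ℓ k ≤ (C k).card) :
    ∃ q, raocFeasible C ℓ q ∧ ∀ q', raocFeasible C ℓ q' → raocObj r v q' ≤ raocObj r v q := by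
  have hclosed : IsClosed {q : Finset (Fin n) → ℝ |
      ∀ k, (ℓ k : ℝ) ≤ ∑ S : Finset (Fin n), ((S ∩ C k).card : ℝ) * q S} := by
    simp only [Set.ofPred_forall]
    exact isClosed_iInter fun k => isClosed_le continuous_const (by fun_prop)
  have hcpt := (isCompact_stdSimplex ℝ (Finset (Fin n))).inter_right hclosed
  have hcont : Continuous (raocObj r v) := by
    unfold raocObj
    fun_prop
  -- The point mass on the full assortment is feasible.
  have hne : (stdSimplex ℝ (Finset (Fin n)) ∩ {q : Finset (Fin n) → ℝ |
      ∀ k, (ℓ k : ℝ) ≤ ∑ S : Finset (Fin n), ((S ∩ C k).card : ℝ) * q S}).Nonempty :=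
    ⟨Pi.single Finset.univ 1, single_mem_stdSimplex ℝ _, fun k => by
      simpa [Pi.single_apply] using hℓ k⟩
  obtain ⟨q, ⟨⟨h0, h1⟩, h2⟩, hmax⟩ := hcpt.exists_isMaxOn hne hcont.continuousOn
  exact ⟨q, ⟨h0, h1, h2⟩, fun q' hq' => hmax ⟨⟨hq'.1, hq'.2.1⟩, hq'.2.2⟩⟩

theorem stmt5 {n K : ℕ} (hn : 1 ≤ n) (r v : Fin n → ℝ)
    (hr : ∀ i, 0 ≤ r i) (hv : ∀ i, 0 < v i)
    (C : Fin K → Finset (Fin n)) (ℓ : Fin K → ℕ) (hℓ : ∀ k, ℓ k ≤ (C k).card) :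
    ∃ q : Finset (Fin n) → ℝ,
      raocFeasible C ℓ q ∧
      (∀ q' : Finset (Fin n) → ℝ, raocFeasible C ℓ q' → raocObj r v q' ≤ raocObj r v q) ∧
      Set.ncard {S : Finset (Fin n) | 0 < q S} ≤ min (K + 1) n := by
  obtain ⟨i₀, -, hmax⟩ := Finset.exists_max_image Finset.univ r ⟨(⟨0, hn⟩ : Fin n), by simp⟩
  obtain ⟨q, hq, hopt⟩ := exists_optimal r v C ℓ hℓ
  obtain ⟨q', hq', hobj, hcard⟩ := exists_small_support r v C ℓ i₀ _ (pushInsert i₀ q)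
    (pushInsert_feasible C ℓ i₀ q hq) (pushInsert_eq_zero i₀ q) rfl
  have hpush : raocObj r v q ≤ raocObj r v (pushInsert i₀ q) := by
    unfold raocObj
    rw [sum_mul_pushInsert]
    exact Finset.sum_le_sum fun S _ => mul_le_mul_of_nonneg_right
      (mnlRev_le_insert r v hr hv i₀ (fun i => hmax i (Finset.mem_univ i)) S) (hq.1 S)
  refine ⟨q', hq', fun p hp => (hopt p hp).trans (hpush.trans hobj), le_trans ?_ hcard⟩
  rw [← Set.ncard_coe_finset]
  refine Set.ncard_le_ncard (fun S hS => ?_) (Finset.finite_toSet _)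
  simpa using (show (0 : ℝ) < q' S from hS).ne'
end

section
/- Assume K ≥ 1 and 0 < ε < 1, and let H_K = ∑_{k=1}^K 1/k. Let {S_j*}_{j∈M} be an optimal solution to (m-DAOC) with S_j* ≠ ∅ for every j, and set γ_j = θ_j R_j(S_j*)/∑_{i∈S_j*} v_{ij}. Suppose γ̂_j are weights with γ_j ≤ γ̂_j ≤ (1+ε)·γ_j for all j, and the profile {Ŝ_j}_{j∈M} is feasible and satisfies ∑_{j∈M} γ̂_j ∑_{i∈Ŝ_j} v_{ij} ≤ H_K·∑_{j∈M} γ̂_j ∑_{i∈S_j} v_{ij} for every feasible profile {S_j}_{j∈M}. For each j let S_j ∈ argmax{R_j(S) : Ŝ_j ⊆ S ⊆ N}. Then ∑_{j∈M} θ_j R_j(S_j) ≥ ((1−ε)/(log K + 2))·∑_{j∈M} θ_j R_j(S_j*), where log denotes the natural logarithm. -/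
/-!
Write `A j = θ j * R_j(S*_j)`, `V* j` and `V̂ j` for the total weights of `S*_j` and `Ŝ_j`, and
`x j = V̂ j / V* j`. The set `Ŝ_j ∪ S*_j` is a candidate in the maximization defining `S_j`; its
revenue numerator is at least that of `S*_j` and its denominator at most `1 + V* j + V̂ j`, so
`θ j * R_j(S_j) ≥ A j / (1 + x j)` (`segRev_union_ge`). The approximation guarantee, compared with
the feasible profile `S*`, bounds the `A`-weighted mean of `x`:
`∑ A j * x j = ∑ γ j * V̂ j ≤ (1 + ε) * H_K * ∑ A j`. Jensen's inequality for the convex function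
`x ↦ 1 / (1 + x)`, used through its tangent line (`tangent_le`), yields the ratio
`1 / (1 + (1 + ε) * H_K)`, and `(1 - ε) * (1 + (1 + ε) * H_K) ≤ 1 + H_K ≤ log K + 2`.
-/

open Finset

/-- Expected revenue from customer segment `j` of an assortment under the MNL model. -/
noncomputable def segRev {n m : ℕ} (r : Fin n → ℝ) (v : Fin n → Fin m → ℝ) (j : Fin m)
    (S : Finset (Fin n)) : ℝ :=
  (∑ i ∈ S, r i * v i j) / (1 + ∑ i ∈ S, v i j)

/-- Feasibility of a profile of assortments for (m-DAOC). -/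
def mFeasible {n m K : ℕ} (θ : Fin m → ℝ) (C : Fin K → Finset (Fin n)) (ℓ : Fin K → ℕ)
    (S : Fin m → Finset (Fin n)) : Prop :=
  ∀ k, (ℓ k : ℝ) ≤ ∑ j, θ j * ((S j ∩ C k).card : ℝ)

/-- Adding products to `T` dilutes its MNL revenue by at most the factor `v(T) / (v(T) + v(S))`. -/
lemma segRev_union_ge {n m : ℕ} (r : Fin n → ℝ) (hr : ∀ i, 0 ≤ r i)
    (v : Fin n → Fin m → ℝ) (hv : ∀ i j, 0 < v i j) (j : Fin m) (S T : Finset (Fin n))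
    (hT : T ≠ ∅) :
    segRev r v j T * ((∑ i ∈ T, v i j) / (∑ i ∈ T, v i j + ∑ i ∈ S, v i j))
      ≤ segRev r v j (S ∪ T) := by
  have hTpos : 0 < ∑ i ∈ T, v i j :=
    Finset.sum_pos (fun i _ => hv i j) (Finset.nonempty_iff_ne_empty.mpr hT)
  have hSnn : 0 ≤ ∑ i ∈ S, v i j := Finset.sum_nonneg fun i _ => (hv i j).le
  have hUnn : 0 ≤ ∑ i ∈ S ∪ T, v i j := Finset.sum_nonneg fun i _ => (hv i j).le
  have hU : ∑ i ∈ S ∪ T, v i j ≤ ∑ i ∈ T, v i j + ∑ i ∈ S, v i j := by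
    have h := Finset.sum_union_inter (s₁ := S) (s₂ := T) (f := fun i => v i j)
    have h' : 0 ≤ ∑ i ∈ S ∩ T, v i j := Finset.sum_nonneg fun i _ => (hv i j).le
    linarith
  have hnum : ∑ i ∈ T, r i * v i j ≤ ∑ i ∈ S ∪ T, r i * v i j :=
    Finset.sum_le_sum_of_subset_of_nonneg Finset.subset_union_right
      fun i _ _ => mul_nonneg (hr i) (hv i j).le
  have hN : 0 ≤ ∑ i ∈ T, r i * v i j :=
    Finset.sum_nonneg fun i _ => mul_nonneg (hr i) (hv i j).le
  unfold segRev
  generalize ∑ i ∈ T, r i * v i j = N at *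
  generalize ∑ i ∈ S ∪ T, r i * v i j = N' at *
  generalize ∑ i ∈ S ∪ T, v i j = W at *
  generalize ∑ i ∈ T, v i j = V at *
  generalize ∑ i ∈ S, v i j = U at *
  calc N / (1 + V) * (V / (V + U)) ≤ N / (1 + V + U) := by
        rw [div_mul_div_comm, div_le_div_iff₀ (by positivity) (by positivity)]
        have : 0 ≤ N * U := mul_nonneg hN hSnn
        nlinarith
    _ ≤ N' / (1 + W) := by
        apply div_le_div₀ (hN.trans hnum) hnum (by linarith) (by linarith)

/-- The tangent line of `x ↦ 1 / (1 + x)` at `1 + x = T` lies below the graph, with `x = U / V`. -/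
lemma tangent_le {T U V : ℝ} (hT : 0 < T) (hV : 0 < V) (hU : 0 ≤ U) :
    (2 * T - 1 - U / V) / T ^ 2 ≤ V / (V + U) := by
  have h : V / (V + U) = 1 / (1 + U / V) := by field_simp
  have hx : 0 ≤ U / V := by positivity
  rw [h, div_le_div_iff₀ (by positivity) (by positivity)]
  nlinarith [sq_nonneg (T - (1 + U / V))]

theorem stmt8 {n m K : ℕ} (hK : 1 ≤ K) (ε : ℝ) (hε0 : 0 < ε) (hε1 : ε < 1)
    (HK : ℝ) (hHK : HK = ∑ k ∈ Finset.range K, (1 : ℝ) / (k + 1))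
    (r : Fin n → ℝ) (hr : ∀ i, 0 ≤ r i)
    (v : Fin n → Fin m → ℝ) (hv : ∀ i j, 0 < v i j)
    (θ : Fin m → ℝ) (hθ : ∀ j, 0 < θ j) (hθ1 : ∑ j, θ j = 1)
    (C : Fin K → Finset (Fin n)) (ℓ : Fin K → ℕ)
    (Sstar : Fin m → Finset (Fin n))
    (hSstarFeas : mFeasible θ C ℓ Sstar)
    (hSstarOpt : ∀ S, mFeasible θ C ℓ S →
      ∑ j, θ j * segRev r v j (S j) ≤ ∑ j, θ j * segRev r v j (Sstar j))
    (hSstarNe : ∀ j, Sstar j ≠ ∅)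
    (γ : Fin m → ℝ)
    (hγ : ∀ j, γ j = θ j * segRev r v j (Sstar j) / ∑ i ∈ Sstar j, v i j)
    (γhat : Fin m → ℝ)
    (hγhat1 : ∀ j, γ j ≤ γhat j) (hγhat2 : ∀ j, γhat j ≤ (1 + ε) * γ j)
    (Shat : Fin m → Finset (Fin n)) (hShatFeas : mFeasible θ C ℓ Shat)
    (hShatApprox : ∀ S, mFeasible θ C ℓ S →
      ∑ j, γhat j * ∑ i ∈ Shat j, v i j ≤ HK * ∑ j, γhat j * ∑ i ∈ S j, v i j)
    (Ssol : Fin m → Finset (Fin n))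
    (hSsol : ∀ j, Shat j ⊆ Ssol j ∧
      ∀ S' : Finset (Fin n), Shat j ⊆ S' → segRev r v j S' ≤ segRev r v j (Ssol j)) :
    ((1 - ε) / (Real.log K + 2)) * ∑ j, θ j * segRev r v j (Sstar j)
      ≤ ∑ j, θ j * segRev r v j (Ssol j) := by
  have hVpos : ∀ j, 0 < ∑ i ∈ Sstar j, v i j := fun j =>
    Finset.sum_pos (fun i _ => hv i j) (Finset.nonempty_iff_ne_empty.mpr (hSstarNe j))
  have hUnn : ∀ j, 0 ≤ ∑ i ∈ Shat j, v i j := fun j =>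
    Finset.sum_nonneg fun i _ => (hv i j).le
  have hAnn : ∀ j, 0 ≤ θ j * segRev r v j (Sstar j) := fun j =>
    mul_nonneg (hθ j).le (div_nonneg
      (Finset.sum_nonneg fun i _ => mul_nonneg (hr i) (hv i j).le) (by linarith [hVpos j]))
  have hγV : ∀ j, γ j * ∑ i ∈ Sstar j, v i j = θ j * segRev r v j (Sstar j) := fun j => by
    rw [hγ j, div_mul_cancel₀ _ (hVpos j).ne']
  have hHnn : 0 ≤ HK := by
    rw [hHK]; exact Finset.sum_nonneg fun k _ => by positivity
  have hHlog : HK ≤ 1 + Real.log K := by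
    have h := harmonic_le_one_add_log K
    simp only [harmonic, Rat.cast_sum, Rat.cast_inv] at h
    rw [hHK]
    simpa [one_div] using h
  have hlog : 0 ≤ Real.log K := Real.log_natCast_nonneg K
  set A : ℝ := ∑ j, θ j * segRev r v j (Sstar j) with hA
  have hA0 : 0 ≤ A := Finset.sum_nonneg fun j _ => hAnn j
  set T : ℝ := 1 + (1 + ε) * HK with hTdef
  have hT : 0 < T := by positivity
  have hmean : ∑ j, γ j * ∑ i ∈ Shat j, v i j ≤ (1 + ε) * HK * A := by
    calc ∑ j, γ j * ∑ i ∈ Shat j, v i j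
        ≤ ∑ j, γhat j * ∑ i ∈ Shat j, v i j :=
          Finset.sum_le_sum fun j _ => mul_le_mul_of_nonneg_right (hγhat1 j) (hUnn j)
      _ ≤ HK * ∑ j, γhat j * ∑ i ∈ Sstar j, v i j := hShatApprox _ hSstarFeas
      _ ≤ HK * ((1 + ε) * A) := by
          refine mul_le_mul_of_nonneg_left ?_ hHnn
          rw [hA, Finset.mul_sum]
          refine Finset.sum_le_sum fun j _ => ?_
          rw [← hγV j, ← mul_assoc]
          exact mul_le_mul_of_nonneg_right (hγhat2 j) (hVpos j).le
      _ = (1 + ε) * HK * A := by ring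
  have hseg : ∀ j, ((2 * T - 1) * (θ j * segRev r v j (Sstar j))
      - γ j * ∑ i ∈ Shat j, v i j) / T ^ 2 ≤ θ j * segRev r v j (Ssol j) := fun j => by
    have h1 := segRev_union_ge r hr v hv j (Shat j) (Sstar j) (hSstarNe j)
    have h2 := (hSsol j).2 (Shat j ∪ Sstar j) Finset.subset_union_left
    have h3 := mul_le_mul_of_nonneg_left (tangent_le hT (hVpos j) (hUnn j)) (hAnn j)
    have h4 := mul_le_mul_of_nonneg_left (h1.trans h2) (hθ j).le
    rw [← mul_assoc] at h4
    refine le_trans (le_of_eq ?_) (h3.trans h4)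
    rw [hγ j]
    ring
  have hJensen : A / T ≤ ∑ j, θ j * segRev r v j (Ssol j) := by
    refine le_trans ?_ (Finset.sum_le_sum fun j _ => hseg j)
    rw [← Finset.sum_div, Finset.sum_sub_distrib, ← Finset.mul_sum, ← hA,
      div_le_div_iff₀ hT (by positivity)]
    have h : T * A ≤ (2 * T - 1) * A - ∑ j, γ j * ∑ i ∈ Shat j, v i j := by
      rw [hTdef]; linarith
    nlinarith [mul_le_mul_of_nonneg_right h hT.le]
  refine le_trans ?_ hJensen
  rw [div_mul_eq_mul_div, div_le_div_iff₀ (by linarith) hT]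
  have hratio : (1 - ε) * T ≤ Real.log K + 2 := by
    rw [hTdef]; nlinarith [mul_nonneg (sq_nonneg ε) hHnn]
  nlinarith [mul_le_mul_of_nonneg_right hratio hA0]
end

section
/- Assume K ≥ 1 and let log denote the natural logarithm. For each ℓ ∈ M and k ∈ {1,…,K} define ℓ_k^{(ℓ)} = ⌈(ℓ_k − ∑_{j∈M, j≠ℓ} θ_j·|C_k|)/θ_ℓ⌉. Suppose that for each ℓ ∈ M there is an assortment S^{(ℓ)} ⊆ N with |S^{(ℓ)} ∩ C_k| ≥ ℓ_k^{(ℓ)} for all k and with R_ℓ(S^{(ℓ)}) ≥ (1/(log K + 2))·R_ℓ(S) for every S ⊆ N satisfying |S ∩ C_k| ≥ ℓ_k^{(ℓ)} for all k. For each ℓ define the profile {S_j^{(ℓ)}}_{j∈M} by S_ℓ^{(ℓ)} = S^{(ℓ)} and S_j^{(ℓ)} = N for j ≠ ℓ. Then each profile {S_j^{(ℓ)}}_{j∈M} is feasible for (m-DAOC), and max_{ℓ∈M} ∑_{j∈M} θ_j R_j(S_j^{(ℓ)}) ≥ (1/(m(log K + 2)))·∑_{j∈M} θ_j R_j(S_j)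 for every feasible profile {S_j}_{j∈M}. -/
/-!
The updated threshold for segment `l` is exactly what segment `l` has to contribute to category `C k`
once every other segment contributes the whole category (`upd_le_iff`). Hence each candidate profile
is feasible, and, conversely, the `l`-th assortment of any feasible profile satisfies the updated
constraints, because the other segments contribute at most the whole category.

Given a feasible profile `S`, take `l` maximizing `θ l * segRev r v l (S l)`. This term is at least a
`1 / m` fraction of the total, the assortment `A l` loses at most a further factor `log K + 2` on it,
and the other segments of the profile `P l` contribute nonnegative revenue.
-/

open Finset

theorem segRev_nonneg {n m : ℕ} {r : Fin n → ℝ} (hr : ∀ i, 0 ≤ r i)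
    {v : Fin n → Fin m → ℝ} (hv : ∀ i j, 0 < v i j) (j : Fin m) (S : Finset (Fin n)) :
    0 ≤ segRev r v j S :=
  div_nonneg (sum_nonneg fun i _ => mul_nonneg (hr i) (hv i j).le)
    (add_nonneg zero_le_one (sum_nonneg fun i _ => (hv i j).le))

/-- Clearing the ceiling and the division in the updated threshold. In use, `t * a` is the contribution
of one segment to a category, and `q` the largest possible contribution of all other segments. -/
theorem upd_le_iff {p q t : ℝ} (ht : 0 < t) (a : ℕ) :
    ⌈(p - q) / t⌉ ≤ (a : ℤ) ↔ p ≤ t * a + q := by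
  rw [Int.ceil_le, div_le_iff₀ ht, Int.cast_natCast, sub_le_iff_le_add, mul_comm]

theorem stmt9 {n m K : ℕ} (hK : 1 ≤ K)
    (r : Fin n → ℝ) (hr : ∀ i, 0 ≤ r i)
    (v : Fin n → Fin m → ℝ) (hv : ∀ i j, 0 < v i j)
    (θ : Fin m → ℝ) (hθ : ∀ j, 0 < θ j) (hθ1 : ∑ j, θ j = 1)
    (C : Fin K → Finset (Fin n)) (ℓ : Fin K → ℕ)
    -- the updated thresholds ℓ_k^{(l)}
    (ℓupd : Fin m → Fin K → ℤ)
    (hℓupd : ∀ (l : Fin m) (k : Fin K),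
      ℓupd l k = ⌈((ℓ k : ℝ) - (∑ j ∈ Finset.univ.erase l, θ j) * (C k).card) / θ l⌉)
    -- for each segment l, an assortment satisfying the updated covering constraints that is
    -- a 1/(log K + 2)-approximation to the corresponding single-segment problem
    (A : Fin m → Finset (Fin n))
    (hAcov : ∀ (l : Fin m) (k : Fin K), ℓupd l k ≤ (((A l) ∩ C k).card : ℤ))
    (hAapprox : ∀ (l : Fin m) (S : Finset (Fin n)),
      (∀ k, ℓupd l k ≤ ((S ∩ C k).card : ℤ)) →
      segRev r v l S / (Real.log K + 2) ≤ segRev r v l (A l))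
    -- the candidate profiles
    (P : Fin m → Fin m → Finset (Fin n))
    (hP : ∀ l j, P l j = if j = l then A l else Finset.univ) :
    (∀ l, mFeasible θ C ℓ (P l)) ∧
    ∀ S : Fin m → Finset (Fin n), mFeasible θ C ℓ S →
      ∃ l : Fin m, (1 / (m * (Real.log K + 2))) * ∑ j, θ j * segRev r v j (S j)
        ≤ ∑ j, θ j * segRev r v j (P l j) := by
  have hlog : 0 < Real.log K + 2 := by
    have := Real.log_natCast_nonneg K
    linarith
  refine ⟨fun l k => ?_, fun S hS => ?_⟩
  · have h := hAcov l k
    rw [hℓupd, upd_le_iff (hθ l)] at h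
    rw [← add_sum_erase _ _ (mem_univ l), hP l l, if_pos rfl]
    refine h.trans_eq ?_
    rw [sum_mul]
    congr 1
    refine sum_congr rfl fun j hj => ?_
    rw [hP, if_neg (ne_of_mem_erase hj), univ_inter]
  · -- There is at least one segment, since the arrival probabilities sum to `1`.
    have hne : (univ : Finset (Fin m)).Nonempty := by
      rw [nonempty_iff_ne_empty]
      intro h
      simp [h] at hθ1
    obtain ⟨l, -, hl⟩ := exists_max_image univ (fun j => θ j * segRev r v j (S j)) hne
    refine ⟨l, ?_⟩
    have hcov : ∀ k, ℓupd l k ≤ ((S l ∩ C k).card : ℤ) := by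
      intro k
      rw [hℓupd, upd_le_iff (hθ l)]
      have h := hS k
      rw [← add_sum_erase _ _ (mem_univ l)] at h
      refine h.trans ?_
      rw [sum_mul]
      gcongr with j hj
      · exact (hθ j).le
      · exact inter_subset_right
    have happ := hAapprox l (S l) hcov
    have hm : (0 : ℝ) < m := by
      have : 0 < m := l.pos
      exact_mod_cast this
    have hsum : ∑ j, θ j * segRev r v j (S j) ≤ m * (θ l * segRev r v l (S l)) := by
      simpa using sum_le_card_nsmul univ _ _ fun j hj => hl j hj
    calc (1 / (m * (Real.log K + 2))) * ∑ j, θ j * segRev r v j (S j)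
        ≤ (1 / (m * (Real.log K + 2))) * (m * (θ l * segRev r v l (S l))) := by gcongr
      _ = θ l * (segRev r v l (S l) / (Real.log K + 2)) := by field_simp
      _ ≤ θ l * segRev r v l (P l l) := by
        rw [hP, if_pos rfl]
        exact mul_le_mul_of_nonneg_left happ (hθ l).le
      _ ≤ ∑ j, θ j * segRev r v j (P l j) :=
        single_le_sum (f := fun j => θ j * segRev r v j (P l j))
          (fun j _ => mul_nonneg (hθ j).le (segRev_nonneg hr hv j _)) (mem_univ l)
end

section
/- Assume: browsing probabilities β_1 ≥ β_2 ≥ ⋯ ≥ β_G ≥ 0 with ∑_{g=1}^G β_g = 1, and G ≥ 3n. For each i ∈ {1,…,n}, let S_i* be a maximizer of R(S) over {S ⊆ N : |S| ≤ i}, and let Ŝ ⊆ N satisfy the covering constraints. For each i, let X_i be any product framing that places the products of S_i* injectively in positions 1,…,|S_i*|, places the products of Ŝ injectively in positions G−|Ŝ|+1,…,G, and places no product in the remaining positions. Then every X_i is feasible (its offered set contains Ŝ and hence satisfies the covering constraints), and max_{1 ≤ i ≤ n} 𝓡(X_i) ≥ 𝓡(X)/(2·log₂(8n)) for every feasible framing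 X; i.e., the best candidate framing is a 1/(2·log₂(8n))-approximation to the joint assortment optimization and product framing problem with covering constraints. -/
/-!
Write `R i` for the best revenue of an assortment with at most `i` products, `T g` for the
probability that a customer browses at least down to position `g`, and `A` for the best revenue
among the candidate framings.

* The framing `X i` earns `R i` from every customer who stops between position `i` and the block of
  `Shat`. As `β` is nonincreasing and `3 * n ≤ G`, the customers who reach that block carry at most
  half of the mass `T i` (`tail_le_two_mul`), so `R i * T i ≤ 2 * A`.
* MNL revenue is dominated by the sum of the singleton revenues (`mnlRev_le_card_mul`), so every
  assortment earns at most `n * R 1 ≤ n * (2 * A)`.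
* Hence a customer stopping at `g` pays a framing `Y` at most `2 * A * min (1 / T g) n`, and the sum
  of `β g * min (1 / T g) n` is at most the integral of `min (1 / t) n` over `[0, 1]`, which is
  `1 + log n ≤ logb 2 (8 * n)`. The comparison with the integral is a telescoping sum in the
  concave antiderivative `capLog` (`mul_le_capLog_sub`).
-/

open Finset

/-- The set of products placed in the first `g` positions (positions `1,…,g`) of framing `X`;
`none` means the position is empty. -/
def offered {n G : ℕ} (X : Fin G → Option (Fin n)) (g : Fin G) : Finset (Fin n) :=
  Finset.univ.filter fun p => ∃ g' : Fin G, g' ≤ g ∧ X g' = some p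

/-- The set of all products offered by framing `X`. -/
def offeredAll {n G : ℕ} (X : Fin G → Option (Fin n)) : Finset (Fin n) :=
  Finset.univ.filter fun p => ∃ g' : Fin G, X g' = some p

/-- Expected revenue of a product framing `X` under browsing probabilities `β`. -/
noncomputable def framRev {n G : ℕ} (r v : Fin n → ℝ) (β : Fin G → ℝ)
    (X : Fin G → Option (Fin n)) : ℝ :=
  ∑ g : Fin G, β g * mnlRev r v (offered X g)

/-- The antiderivative, vanishing at `0`, of `x ↦ min 1 (1 / x)` on `(0, ∞)`, continued by the
identity to the nonpositive reals. -/
noncomputable def capLog (x : ℝ) : ℝ := if x ≤ 1 then x else 1 + Real.log x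

/-- Tangent-line bound for the concave function `capLog`: a slope `ρ` with `ρ ≤ M` and `ρ * x ≤ M`
is at most `M` times the derivative of `capLog` at `x`. -/
lemma mul_le_capLog_sub {x y ρ M : ℝ} (hyx : y ≤ x)
    (h1 : ρ ≤ M) (h2 : ρ * x ≤ M) (hM : 0 ≤ M) :
    (x - y) * ρ ≤ M * (capLog x - capLog y) := by
  unfold capLog
  by_cases hx : x ≤ 1
  · rw [if_pos hx, if_pos (hyx.trans hx), mul_comm]
    exact mul_le_mul_of_nonneg_right h1 (by linarith)
  · rw [if_neg hx]
    push Not at hx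
    have hx0 : 0 < x := by linarith
    have hρ : ρ ≤ M / x := by rwa [le_div_iff₀ hx0]
    have h3 : (x - y) * ρ ≤ M * ((x - y) / x) := by
      calc (x - y) * ρ ≤ (x - y) * (M / x) := mul_le_mul_of_nonneg_left hρ (by linarith)
        _ = M * ((x - y) / x) := by ring
    refine h3.trans (mul_le_mul_of_nonneg_left ?_ hM)
    split_ifs with hy1
    · -- The slack is at least `(1 - y) * (1 - 1 / x)`.
      have hl := Real.one_sub_inv_le_log_of_pos hx0
      have hi : x⁻¹ ≤ 1 := inv_le_one_of_one_le₀ hx.le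
      have e : (x - y) / x = 1 - y * x⁻¹ := by field_simp
      rw [e]
      nlinarith [mul_nonneg (sub_nonneg.2 hy1) (sub_nonneg.2 hi)]
    · push Not at hy1
      have hy0 : 0 < y := by linarith
      have hl := Real.one_sub_inv_le_log_of_pos (div_pos hx0 hy0)
      rw [Real.log_div hx0.ne' hy0.ne', inv_div] at hl
      have e : (x - y) / x = 1 - y / x := by field_simp
      rw [e]
      linarith

lemma mnlRev_nonneg {n : ℕ} {r v : Fin n → ℝ} (hr : ∀ i, 0 ≤ r i) (hv : ∀ i, 0 < v i)
    (S : Finset (Fin n)) : 0 ≤ mnlRev r v S := by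
  have h : 0 ≤ ∑ i ∈ S, v i := Finset.sum_nonneg fun i _ => (hv i).le
  exact div_nonneg (Finset.sum_nonneg fun i _ => mul_nonneg (hr i) (hv i).le) (by linarith)

/-- MNL revenue is at most the sum of the revenues of the single products, hence at most the
number of products times any common bound on these. -/
lemma mnlRev_le_card_mul {n : ℕ} {r v : Fin n → ℝ} (hr : ∀ i, 0 ≤ r i) (hv : ∀ i, 0 < v i)
    (S : Finset (Fin n)) {ρ : ℝ} (hρ : ∀ p, mnlRev r v {p} ≤ ρ) :
    mnlRev r v S ≤ S.card * ρ := by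
  have h : mnlRev r v S ≤ ∑ p ∈ S, mnlRev r v {p} := by
    unfold mnlRev
    rw [Finset.sum_div]
    refine Finset.sum_le_sum fun p hp => ?_
    rw [Finset.sum_singleton, Finset.sum_singleton]
    have h1 : v p ≤ ∑ i ∈ S, v i :=
      Finset.single_le_sum (f := v) (fun i _ => (hv i).le) hp
    exact div_le_div_of_nonneg_left (mul_nonneg (hr p) (hv p).le)
      (by linarith [hv p]) (by linarith)
  refine h.trans ?_
  rw [← nsmul_eq_mul]
  exact Finset.sum_le_card_nsmul _ _ _ fun p _ => hρ p

lemma card_offered_le {n G : ℕ} (Y : Fin G → Option (Fin n)) (g : Fin G) :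
    (offered Y g).card ≤ g + 1 := by
  have h : (offered Y g).map Function.Embedding.some ⊆ (Finset.Iic g).image Y := by
    intro q hq
    simp only [offered, Finset.mem_map, Finset.mem_filter, Finset.mem_univ, true_and] at hq
    obtain ⟨p, ⟨g', hg', hp⟩, rfl⟩ := hq
    exact Finset.mem_image.2 ⟨g', Finset.mem_Iic.2 hg', hp⟩
  have h2 := (Finset.card_le_card h).trans Finset.card_image_le
  simpa using h2

/-- The last `n` terms of a nonnegative nonincreasing sequence of length `G` make up at most half
of any final segment that contains at least `2 * n` terms. -/
lemma tail_le_two_mul {b : ℕ → ℝ} (hb : Antitone b) (hb0 : ∀ k, 0 ≤ b k) {a n G : ℕ}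
    (h : a + 2 * n ≤ G) :
    ∑ k ∈ Finset.Ico a G, b k ≤ 2 * ∑ k ∈ Finset.Ico a (G - n), b k := by
  rw [← Finset.sum_Ico_consecutive b (show a ≤ G - n by omega) (Nat.sub_le G n), two_mul]
  gcongr ?_ + ?_
  · exact le_rfl
  calc ∑ k ∈ Finset.Ico (G - n) G, b k
      = ∑ k ∈ Finset.Ico (G - 2 * n) (G - n), b (k + n) := by
        rw [Finset.sum_Ico_add' b]
        congr 2 <;> omega
    _ ≤ ∑ k ∈ Finset.Ico (G - 2 * n) (G - n), b k :=
        Finset.sum_le_sum fun k _ => hb (Nat.le_add_right k n)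
    _ ≤ ∑ k ∈ Finset.Ico a (G - n), b k :=
        Finset.sum_le_sum_of_subset_of_nonneg
          (Finset.Ico_subset_Ico_left (by omega)) fun k _ _ => hb0 k

/-- Discrete form of the integral bound: if a customer stopping at position `k` pays `f k`, where
`f k ≤ n * M` and `f k` times the remaining mass is at most `M`, then the total payment is at most
`M * (1 + log n)`. -/
lemma sum_mul_le_one_add_log {b f : ℕ → ℝ} (hb0 : ∀ k, 0 ≤ b k) {n G : ℕ} (hn : 0 < n) {M : ℝ}
    (hM : 0 ≤ M) (hsum : ∑ k ∈ Finset.range G, b k = 1)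
    (h1 : ∀ k < G, f k ≤ n * M) (h2 : ∀ k < G, f k * ∑ j ∈ Finset.Ico k G, b j ≤ M) :
    ∑ k ∈ Finset.range G, b k * f k ≤ M * (1 + Real.log n) := by
  have hn0 : (0 : ℝ) < n := by exact_mod_cast hn
  set T : ℕ → ℝ := fun k => ∑ j ∈ Finset.Ico k G, b j with hT
  have step : ∀ k ∈ Finset.range G,
      b k * f k ≤ M * (capLog (n * T k) - capLog (n * T (k + 1))) := by
    intro k hk
    have hk' := Finset.mem_range.1 hk
    have e : T k = b k + T (k + 1) := Finset.sum_eq_sum_Ico_succ_bot hk' b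
    have := mul_le_capLog_sub (x := n * T k) (y := n * T (k + 1)) (ρ := f k / n) (M := M)
      (mul_le_mul_of_nonneg_left (by linarith [hb0 k]) hn0.le)
      (by rw [div_le_iff₀ hn0]; linarith [h1 k hk'])
      (by
        have e2 : f k / n * (n * T k) = f k * T k := by field_simp
        rw [e2]; exact h2 k hk') hM
    refine le_trans (le_of_eq ?_) this
    rw [e]; field_simp; ring
  refine (Finset.sum_le_sum step).trans ?_
  rw [← Finset.mul_sum, Finset.sum_range_sub' (fun k => capLog (n * T k))]
  refine mul_le_mul_of_nonneg_left ?_ hM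
  have e0 : T 0 = 1 := by rw [hT]; simpa using hsum
  have eG : T G = 0 := by simp [hT]
  rw [e0, eG]
  simp only [capLog, mul_one, mul_zero, zero_le_one, if_true, sub_zero]
  split_ifs with h
  · have : (1 : ℝ) ≤ n := by exact_mod_cast hn
    linarith [Real.log_nonneg this]
  · exact le_rfl

lemma one_add_log_le_logb {n : ℕ} (hn : 0 < n) :
    1 + Real.log n ≤ Real.logb 2 (8 * n) := by
  have hn1 : (1 : ℝ) ≤ n := by exact_mod_cast hn
  have h8 : Real.logb 2 8 = 3 := by
    rw [show (8 : ℝ) = 2 ^ (3 : ℕ) by norm_num, Real.logb_pow]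
    simp
  rw [Real.logb_mul (by norm_num) (by positivity), h8]
  have h2 : Real.log n ≤ Real.logb 2 n := by
    rw [Real.logb, le_div_iff₀ (Real.log_pos one_lt_two)]
    nlinarith [Real.log_nonneg hn1, Real.log_two_lt_d9]
  linarith

theorem stmt18 {n G K : ℕ} (hn : 0 < n) (hG : 3 * n ≤ G)
    (r v : Fin n → ℝ) (hr : ∀ i, 0 ≤ r i) (hv : ∀ i, 0 < v i)
    (C : Fin K → Finset (Fin n)) (ℓ : Fin K → ℕ) (hℓ : ∀ k, ℓ k ≤ (C k).card)
    -- browsing probabilities: nonincreasing, nonnegative, summing to one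
    (β : Fin G → ℝ) (hβmono : ∀ g g' : Fin G, g ≤ g' → β g' ≤ β g)
    (hβnonneg : ∀ g, 0 ≤ β g) (hβsum : ∑ g, β g = 1)
    -- S_i* maximizes R over assortments of cardinality at most i
    (Sstar : ℕ → Finset (Fin n))
    (hSstar : ∀ i ∈ Finset.Icc 1 n, (Sstar i).card ≤ i ∧
      ∀ S : Finset (Fin n), S.card ≤ i → mnlRev r v S ≤ mnlRev r v (Sstar i))
    -- Ŝ satisfies the covering constraints
    (Shat : Finset (Fin n)) (hShat : ∀ k, ℓ k ≤ (Shat ∩ C k).card)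
    -- the candidate framings X_i
    (X : ℕ → Fin G → Option (Fin n))
    -- X_i places the products of S_i* injectively in positions 1,…,|S_i*|
    (hX1 : ∀ i ∈ Finset.Icc 1 n, ∀ g : Fin G, (g : ℕ) < (Sstar i).card →
      ∃ p ∈ Sstar i, X i g = some p)
    (hX1' : ∀ i ∈ Finset.Icc 1 n, ∀ p ∈ Sstar i,
      ∃ g : Fin G, (g : ℕ) < (Sstar i).card ∧ X i g = some p)
    (hX1inj : ∀ i ∈ Finset.Icc 1 n, ∀ g g' : Fin G, (g : ℕ) < (Sstar i).card →
      (g' : ℕ) < (Sstar i).card → X i g = X i g' → g = g')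
    -- X_i places the products of Ŝ injectively in positions G−|Ŝ|+1,…,G
    (hX2 : ∀ i ∈ Finset.Icc 1 n, ∀ g : Fin G, G - Shat.card ≤ (g : ℕ) →
      ∃ p ∈ Shat, X i g = some p)
    (hX2' : ∀ i ∈ Finset.Icc 1 n, ∀ p ∈ Shat,
      ∃ g : Fin G, G - Shat.card ≤ (g : ℕ) ∧ X i g = some p)
    (hX2inj : ∀ i ∈ Finset.Icc 1 n, ∀ g g' : Fin G, G - Shat.card ≤ (g : ℕ) →
      G - Shat.card ≤ (g' : ℕ) → X i g = X i g' → g = g')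
    -- all remaining positions of X_i are empty
    (hX0 : ∀ i ∈ Finset.Icc 1 n, ∀ g : Fin G, (Sstar i).card ≤ (g : ℕ) →
      (g : ℕ) < G - Shat.card → X i g = none) :
    -- every X_i is feasible, and the best of them is a 1/(2 log₂(8n))-approximation
    (∀ i ∈ Finset.Icc 1 n, ∀ k, ℓ k ≤ (offeredAll (X i) ∩ C k).card) ∧
    ∀ Y : Fin G → Option (Fin n), (∀ k, ℓ k ≤ (offeredAll Y ∩ C k).card) →
      ∃ i ∈ Finset.Icc 1 n,
        framRev r v β Y / (2 * Real.logb 2 (8 * n)) ≤ framRev r v β (X i) := by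
  constructor
  · intro i hi k
    refine (hShat k).trans (Finset.card_le_card (Finset.inter_subset_inter_right ?_))
    intro p hp
    obtain ⟨g, -, hg⟩ := hX2' i hi p hp
    simp only [offeredAll, Finset.mem_filter, Finset.mem_univ, true_and]
    exact ⟨g, hg⟩
  intro Y _
  have hR0 := mnlRev_nonneg hr hv
  have hcard : ∀ S : Finset (Fin n), S.card ≤ n := fun S => by
    simpa using Finset.card_le_univ S
  obtain ⟨m, hm, hmax⟩ := Finset.exists_max_image (Finset.Icc 1 n)
    (fun i => framRev r v β (X i)) ⟨1, by simp; omega⟩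
  refine ⟨m, hm, ?_⟩
  set A := framRev r v β (X m) with hA
  have hA0 : 0 ≤ A := Finset.sum_nonneg fun g _ => mul_nonneg (hβnonneg g) (hR0 _)
  -- Browsing probabilities extended by zero to all of `ℕ`.
  set b : ℕ → ℝ := fun k => if h : k < G then β ⟨k, h⟩ else 0 with hbdef
  have hbβ : ∀ g : Fin G, b g = β g := fun g => by simp [hbdef]
  have hb0 : ∀ k, 0 ≤ b k := fun k => by
    simp only [hbdef]; split_ifs
    · exact hβnonneg _
    · exact le_rfl
  have hb : Antitone b := by
    intro j k hjk
    simp only [hbdef]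
    split_ifs with h1 h2 h2
    · exact hβmono _ _ hjk
    · omega
    · exact hβnonneg _
    · exact le_rfl
  have hbsum : ∑ k ∈ Finset.range G, b k = 1 := by
    rw [← Fin.sum_univ_eq_sum_range, ← hβsum]
    exact Finset.sum_congr rfl fun g _ => hbβ g
  have hoff : ∀ i ∈ Finset.Icc 1 n, ∀ g : Fin G, i ≤ (g : ℕ) + 1 → (g : ℕ) < G - n →
      offered (X i) g = Sstar i := by
    intro i hi g hg1 hg2
    have hc := (hSstar i hi).1
    have hs := hcard Shat
    ext p
    simp only [offered, Finset.mem_filter, Finset.mem_univ, true_and]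
    constructor
    · rintro ⟨g', hg', hp⟩
      have hle : (g' : ℕ) ≤ g := hg'
      by_cases hlt : (g' : ℕ) < (Sstar i).card
      · obtain ⟨q, hq, hq'⟩ := hX1 i hi g' hlt
        rw [hp] at hq'
        exact (Option.some.inj hq') ▸ hq
      · rw [hX0 i hi g' (by omega) (by omega)] at hp
        exact absurd hp (by simp)
    · intro hp
      obtain ⟨g', hlt, hp'⟩ := hX1' i hi p hp
      exact ⟨g', by rw [Fin.le_def]; omega, hp'⟩
  have key : ∀ i ∈ Finset.Icc 1 n,
      mnlRev r v (Sstar i) * ∑ k ∈ Finset.Ico (i - 1) G, b k ≤ 2 * A := by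
    intro i hi
    have hi' := Finset.mem_Icc.1 hi
    have h1 : mnlRev r v (Sstar i) * ∑ k ∈ Finset.Ico (i - 1) (G - n), b k ≤ A := by
      refine le_trans ?_ (hmax i hi)
      have e : ∑ k ∈ Finset.Ico (i - 1) (G - n), b k
          = ∑ g : Fin G, if i - 1 ≤ (g : ℕ) ∧ (g : ℕ) < G - n then b g else 0 := by
        rw [Fin.sum_univ_eq_sum_range
          (fun k => if i - 1 ≤ k ∧ k < G - n then b k else 0) G, ← Finset.sum_filter]
        refine Finset.sum_congr ?_ fun _ _ => rfl
        ext k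
        simp only [Finset.mem_Ico, Finset.mem_filter, Finset.mem_range]
        omega
      rw [e, Finset.mul_sum]
      refine Finset.sum_le_sum fun g _ => ?_
      split_ifs with hg
      · rw [hoff i hi g (by omega) hg.2, hbβ, mul_comm]
      · rw [mul_zero]
        exact mul_nonneg (hβnonneg g) (hR0 _)
    have h2 := tail_le_two_mul hb hb0 (a := i - 1) (n := n) (G := G) (by omega)
    nlinarith [mul_le_mul_of_nonneg_left h2 (hR0 (Sstar i))]
  have h1mem : 1 ∈ Finset.Icc 1 n := by simp; omega
  have hR1 : mnlRev r v (Sstar 1) ≤ 2 * A := by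
    have := key 1 h1mem
    simpa [hbsum] using this
  -- The payment of a customer of `Y` stopping at `k`, extended by zero.
  set f : ℕ → ℝ := fun k => if h : k < G then mnlRev r v (offered Y ⟨k, h⟩) else 0 with hfdef
  have hY : framRev r v β Y = ∑ k ∈ Finset.range G, b k * f k := by
    rw [← Fin.sum_univ_eq_sum_range (fun k => b k * f k)]
    refine Finset.sum_congr rfl fun g _ => ?_
    simp only [hbβ]
    simp [hfdef]
  have hmain : framRev r v β Y ≤ 2 * A * (1 + Real.log n) := by
    rw [hY]
    refine sum_mul_le_one_add_log hb0 hn (by linarith) hbsum ?_ ?_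
    · intro k hk
      simp only [hfdef, dif_pos hk]
      refine (mnlRev_le_card_mul hr hv _ fun p =>
        ((hSstar 1 h1mem).2 {p} (by simp)).trans hR1).trans ?_
      refine mul_le_mul_of_nonneg_right ?_ (by linarith)
      exact_mod_cast hcard _
    · intro k hk
      simp only [hfdef, dif_pos hk]
      have hi : min (k + 1) n ∈ Finset.Icc 1 n := by
        rw [Finset.mem_Icc]; omega
      have hle := (hSstar _ hi).2 (offered Y ⟨k, hk⟩)
        (le_min (card_offered_le Y ⟨k, hk⟩) (hcard _))
      refine le_trans ?_ (key _ hi)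
      refine mul_le_mul hle ?_ (Finset.sum_nonneg fun j _ => hb0 j) (hR0 _)
      exact Finset.sum_le_sum_of_subset_of_nonneg
        (Finset.Ico_subset_Ico_left (by omega)) fun j _ _ => hb0 j
  have hlog := one_add_log_le_logb hn
  have hlog0 : 0 ≤ Real.log n := Real.log_nonneg (by exact_mod_cast hn)
  rw [div_le_iff₀ (by linarith)]
  nlinarith [mul_le_mul_of_nonneg_left hlog hA0]
end
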